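/- Cut elimination for GL: the context-sharing cut rule (from Γ{A} and Γ{A⊥} infer Γ{·}) is admissible in the cut-free nested sequent calculus for GL; every sequent provable with cuts is provable without cuts. -/

import Mathlib

/-- Formulas of GL in negation normal form. -/
inductive Formula : Type where
  | pos : ℕ → Formula
  | neg : ℕ → Formula
  | and : Formula → Formula → Formula
  | or  : Formula → Formula → Formula
  | box : Formula → Formula
  | dia : Formula → Formula
deriving DecidableEq

/-- Negation `A⊥` of a formula, via De Morgan duality. -/
def Formula.negate : Formula → Formula
  | .pos a => .neg a
  | .neg a => .pos a
  | .and A B => .or A.negate B.negate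
  | .or A B => .and A.negate B.negate
  | .box A => .dia A.negate
  | .dia A => .box A.negate

/-- An element of a nested sequent: a formula or a nested (bracketed) sequent. -/
inductive SeqElem : Type where
  | fml : Formula → SeqElem
  | nest : List SeqElem → SeqElem

/-- A nested sequent. -/
abbrev Sequent := List SeqElem

/-- Unary contexts: a nested sequent with a single hole. -/
inductive Ctx : Type where
  | hole : Sequent → Ctx
  | nest : Sequent → Ctx → Ctx

/-- Fill the hole of a context with a sequent. -/
def Ctx.fill : Ctx → Sequent → Sequent
  | .hole Δ, Γ => Δ ++ Γ
  | .nest Δ c, Γ => .nest (c.fill Γ) :: Δ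

/-- Depth of a context: number of brackets surrounding the hole. -/
def Ctx.depth : Ctx → ℕ
  | .hole _ => 0
  | .nest _ c => c.depth + 1

/-- Equivalence of nested sequents up to (deep) exchange. -/
inductive SeqEquiv : Sequent → Sequent → Prop where
  | nil : SeqEquiv [] []
  | cons {e : SeqElem} {Γ Δ : Sequent} : SeqEquiv Γ Δ → SeqEquiv (e :: Γ) (e :: Δ)
  | consNest {Γ' Δ' Γ Δ : Sequent} :
      SeqEquiv Γ' Δ' → SeqEquiv Γ Δ → SeqEquiv (.nest Γ' :: Γ) (.nest Δ' :: Δ)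
  | swap (a b : SeqElem) (Γ : Sequent) : SeqEquiv (a :: b :: Γ) (b :: a :: Γ)
  | trans {Γ Δ Θ : Sequent} : SeqEquiv Γ Δ → SeqEquiv Δ Θ → SeqEquiv Γ Θ

/-- `DerivH n Γ`: `Γ` has a cut-free derivation of height at most `n`. -/
inductive DerivH : ℕ → Sequent → Prop where
  | id (n : ℕ) (c : Ctx) (a : ℕ) :
      DerivH n (c.fill [.fml (.pos a), .fml (.neg a)])
  | and {n : ℕ} {c : Ctx} {A B : Formula} :
      DerivH n (c.fill [.fml A]) → DerivH n (c.fill [.fml B]) →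
      DerivH (n + 1) (c.fill [.fml (.and A B)])
  | or {n : ℕ} {c : Ctx} {A B : Formula} :
      DerivH n (c.fill [.fml A, .fml B]) →
      DerivH (n + 1) (c.fill [.fml (.or A B)])
  | box {n : ℕ} {c : Ctx} {A : Formula} :
      DerivH n (c.fill [.nest [.fml (.dia A.negate), .fml A]]) →
      DerivH (n + 1) (c.fill [.fml (.box A)])
  | dia {n : ℕ} (c d : Ctx) {A : Formula} :
      0 < d.depth →
      DerivH n (c.fill (d.fill [.fml A] ++ [.fml (.dia A)])) →
      DerivH (n + 1) (c.fill (d.fill [] ++ [.fml (.dia A)]))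
  | exch {n : ℕ} {Γ Δ : Sequent} : SeqEquiv Γ Δ → DerivH n Γ → DerivH n Δ
  | up {n : ℕ} {Γ : Sequent} : DerivH n Γ → DerivH (n + 1) Γ

/-- Derivability where cut is permitted on formulas satisfying `P`. -/
inductive DerivWith (P : Formula → Prop) : Sequent → Prop where
  | id (c : Ctx) (a : ℕ) :
      DerivWith P (c.fill [.fml (.pos a), .fml (.neg a)])
  | and {c : Ctx} {A B : Formula} :
      DerivWith P (c.fill [.fml A]) → DerivWith P (c.fill [.fml B]) →
      DerivWith P (c.fill [.fml (.and A B)])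
  | or {c : Ctx} {A B : Formula} :
      DerivWith P (c.fill [.fml A, .fml B]) →
      DerivWith P (c.fill [.fml (.or A B)])
  | box {c : Ctx} {A : Formula} :
      DerivWith P (c.fill [.nest [.fml (.dia A.negate), .fml A]]) →
      DerivWith P (c.fill [.fml (.box A)])
  | dia (c d : Ctx) {A : Formula} :
      0 < d.depth →
      DerivWith P (c.fill (d.fill [.fml A] ++ [.fml (.dia A)])) →
      DerivWith P (c.fill (d.fill [] ++ [.fml (.dia A)]))
  | cut {c : Ctx} {A : Formula} : P A →
      DerivWith P (c.fill [.fml A]) → DerivWith P (c.fill [.fml A.negate]) →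
      DerivWith P (c.fill [])
  | exch {Γ Δ : Sequent} : SeqEquiv Γ Δ → DerivWith P Γ → DerivWith P Δ

/-- Cut-free derivability. -/
abbrev Deriv : Sequent → Prop := DerivWith (fun _ => False)

/-!
Cut is eliminated semantically. Every rule, cut included, preserves validity in each transitive
conversely well-founded model, where a bracket is read as a box; for the rule (□) this is Löb's
argument. Conversely, a failed cut-free proof search from `Γ` yields a well-founded tree in
which `Γ` fails. The search moves from a sequent into its brackets and carries along the set `D` of
all `A` such that `◇A` has been met on the way; every formula of `D` may be added to each bracket
further down. Expanding `□B` puts `◇¬B` next to `B` in a new bracket, so `¬B` joins `D`. It cannot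
have been in `D` before, because then the bracket would contain both `B` and `¬B` and be derivable.
As `D` stays within a finite set closed under subformulas and negation, the search terminates.
-/

theorem exists_perm_cons_of_mem {α : Type*} {a : α} {l : List α} (h : a ∈ l) :
    ∃ l', l.Perm (a :: l') := by
  obtain ⟨s, t, rfl⟩ := List.append_of_mem h
  exact ⟨s ++ t, List.perm_middle⟩

/-! ### Exchange and composition of contexts -/

namespace SeqEquiv

theorem refl : ∀ Γ : Sequent, SeqEquiv Γ Γ
  | [] => .nil
  | _ :: Γ => .cons (refl Γ)

theorem symm {Γ Δ : Sequent} (h : SeqEquiv Γ Δ) : SeqEquiv Δ Γ := by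
  induction h with
  | nil => exact .nil
  | cons _ ih => exact .cons ih
  | consNest _ _ ih₁ ih₂ => exact .consNest ih₁ ih₂
  | swap a b Γ => exact .swap b a Γ
  | trans _ _ ih₁ ih₂ => exact .trans ih₂ ih₁

theorem of_perm {Γ Δ : Sequent} (h : Γ.Perm Δ) : SeqEquiv Γ Δ := by
  induction h with
  | nil => exact .nil
  | cons _ _ ih => exact .cons ih
  | swap a b Γ => exact .swap b a Γ
  | trans _ _ ih₁ ih₂ => exact .trans ih₁ ih₂

theorem append_left (Θ : Sequent) {Γ Δ : Sequent} (h : SeqEquiv Γ Δ) :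
    SeqEquiv (Θ ++ Γ) (Θ ++ Δ) := by
  induction Θ with
  | nil => exact h
  | cons _ _ ih => exact .cons ih

theorem fill (c : Ctx) {Γ Δ : Sequent} (h : SeqEquiv Γ Δ) :
    SeqEquiv (c.fill Γ) (c.fill Δ) := by
  induction c with
  | hole Θ => exact h.append_left Θ
  | nest Θ c ih => exact .consNest ih (.refl Θ)

end SeqEquiv

namespace Ctx

/-- Composition of contexts: `c.comp d` is `c` with its hole filled by `d`, up to exchange. -/
def comp : Ctx → Ctx → Ctx
  | .hole Δ, .hole Δ' => .hole (Δ ++ Δ')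
  | .hole Δ, .nest Δ' d => .nest (Δ ++ Δ') d
  | .nest Δ c, d => .nest Δ (c.comp d)

theorem depth_comp (c d : Ctx) : (c.comp d).depth = c.depth + d.depth := by
  induction c with
  | hole Δ => cases d <;> simp only [comp, depth, Nat.zero_add]
  | nest Δ c ih => simp only [comp, depth, ih, Nat.add_right_comm]

theorem seqEquiv_fill_comp (c d : Ctx) (Γ : Sequent) :
    SeqEquiv ((c.comp d).fill Γ) (c.fill (d.fill Γ)) := by
  induction c with
  | hole Δ =>
    cases d with
    | hole Δ' => exact .of_perm (.of_eq (List.append_assoc ..))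
    | nest Δ' d => exact .of_perm List.perm_middle.symm
  | nest Δ c ih => exact .consNest ih (.refl Δ)

end Ctx

/-! ### Derived rules -/

namespace DerivWith

variable {P : Formula → Prop} {c d : Ctx} {Γ Δ : Sequent}

theorem fill_perm (h : Γ.Perm Δ) (hd : DerivWith P (c.fill Γ)) : DerivWith P (c.fill Δ) :=
  .exch (.fill c (.of_perm h)) hd

theorem fill_comp_iff : DerivWith P ((c.comp d).fill Γ) ↔ DerivWith P (c.fill (d.fill Γ)) :=
  ⟨.exch (c.seqEquiv_fill_comp d Γ), .exch (c.seqEquiv_fill_comp d Γ).symm⟩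

theorem fill_comp_assoc_iff {e : Ctx} :
    DerivWith P ((c.comp d).fill (e.fill Γ)) ↔ DerivWith P (c.fill ((d.comp e).fill Γ)) :=
  fill_comp_iff.trans ⟨.exch (.fill c (d.seqEquiv_fill_comp e Γ).symm),
    .exch (.fill c (d.seqEquiv_fill_comp e Γ))⟩

theorem fill_append_iff :
    DerivWith P (c.fill (Γ ++ Δ)) ↔ DerivWith P ((c.comp (.hole Δ)).fill Γ) :=
  ⟨fun h => fill_comp_iff.2 (h.fill_perm List.perm_append_comm),
    fun h => (fill_comp_iff.1 h).fill_perm List.perm_append_comm⟩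

theorem and_cons {A B : Formula} (hA : DerivWith P (c.fill (.fml A :: Γ)))
    (hB : DerivWith P (c.fill (.fml B :: Γ))) : DerivWith P (c.fill (.fml (.and A B) :: Γ)) :=
  fill_append_iff (Γ := [_]).2
    (.and (fill_append_iff (Γ := [_]).1 hA) (fill_append_iff (Γ := [_]).1 hB))

theorem or_cons {A B : Formula} (h : DerivWith P (c.fill (.fml A :: .fml B :: Γ))) :
    DerivWith P (c.fill (.fml (.or A B) :: Γ)) :=
  fill_append_iff (Γ := [_]).2 (.or (fill_append_iff (Γ := [_, _]).1 h))

theorem box_cons {A : Formula}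
    (h : DerivWith P (c.fill (.nest [.fml (.dia A.negate), .fml A] :: Γ))) :
    DerivWith P (c.fill (.fml (.box A) :: Γ)) :=
  fill_append_iff (Γ := [_]).2 (.box (fill_append_iff (Γ := [_]).1 h))

end DerivWith

/-- `A` may be discarded strictly below the hole of `c`, as the rule (◇) allows when `◇A` stands
beside the hole of `c` or higher up. -/
def Available (P : Formula → Prop) (c : Ctx) (A : Formula) : Prop :=
  ∀ d : Ctx, 0 < d.depth →
    DerivWith P (c.fill (d.fill [.fml A])) → DerivWith P (c.fill (d.fill []))

namespace Available

open DerivWith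

variable {P : Formula → Prop} {c d : Ctx} {A : Formula} {Γ : Sequent}

theorem of_dia (P : Formula → Prop) (c : Ctx) (A : Formula) :
    Available P (c.comp (.hole [.fml (.dia A)])) A := fun d hd h =>
  fill_append_iff.1 (.dia c d hd (fill_append_iff.2 h))

theorem comp (h : Available P c A) (d : Ctx) : Available P (c.comp d) A := fun e he hA =>
  have hpos : 0 < (d.comp e).depth := by rw [Ctx.depth_comp]; omega
  fill_comp_assoc_iff.2 (h _ hpos (fill_comp_assoc_iff.1 hA))

theorem fill_of_cons (h : Available P c A) (hd : 0 < d.depth)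
    (hA : DerivWith P ((c.comp d).fill (.fml A :: Γ))) : DerivWith P ((c.comp d).fill Γ) := by
  have hpos : 0 < (d.comp (.hole Γ)).depth := by rw [Ctx.depth_comp]; omega
  have hA' : DerivWith P ((c.comp d).fill ((Ctx.hole Γ).fill [.fml A])) :=
    hA.fill_perm (List.perm_append_singleton _ Γ).symm
  have hΓ := fill_comp_assoc_iff.2 (h _ hpos (fill_comp_assoc_iff.1 hA'))
  rwa [Ctx.fill, List.append_nil] at hΓ

theorem fill_of_append {l : List Formula} (h : ∀ A ∈ l, Available P c A) (hd : 0 < d.depth)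
    (hl : DerivWith P ((c.comp d).fill (l.map .fml ++ Γ))) : DerivWith P ((c.comp d).fill Γ) := by
  induction l with
  | nil => exact hl
  | cons A l ih =>
    rw [List.forall_mem_cons] at h
    exact ih h.2 (h.1.fill_of_cons hd hl)

end Available

namespace DerivWith

variable {P : Formula → Prop} {c : Ctx} {Γ : Sequent}

theorem fill_swap {e e' : SeqElem} (h : DerivWith P (c.fill (e :: e' :: Γ))) :
    DerivWith P (c.fill (e' :: e :: Γ)) :=
  h.fill_perm (.swap e' e Γ)

theorem and_or {A A' B B' : Formula}
    (hA : ∀ Γ : Sequent, DerivWith P (c.fill (.fml A :: .fml A' :: Γ)))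
    (hB : ∀ Γ : Sequent, DerivWith P (c.fill (.fml B :: .fml B' :: Γ))) (Γ : Sequent) :
    DerivWith P (c.fill (.fml (.and A B) :: .fml (.or A' B') :: Γ)) := by
  classical
  have hAB : DerivWith P (c.fill (.fml (.and A B) :: .fml A' :: .fml B' :: Γ)) :=
    and_cons (hA _) ((hB (.fml A' :: Γ)).fill_perm (by grind))
  exact fill_swap (or_cons (hAB.fill_perm (by grind)))

theorem box_dia {A A' : Formula}
    (h : ∀ (c : Ctx) (Γ : Sequent), DerivWith P (c.fill (.fml A :: .fml A' :: Γ)))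
    (c : Ctx) (Γ : Sequent) : DerivWith P (c.fill (.fml (.box A) :: .fml (.dia A') :: Γ)) := by
  classical
  have hN : DerivWith P (((c.comp (.hole [.fml (.dia A')])).comp (.nest Γ (.hole []))).fill
      [.fml (.dia A.negate), .fml A]) :=
    (Available.of_dia P c A').fill_of_cons Nat.one_pos
      ((h _ [.fml (.dia A.negate)]).fill_perm (by grind))
  exact box_cons (fill_swap (fill_comp_iff.1 (fill_comp_iff.1 hN)))

theorem identity_cons (A : Formula) (c : Ctx) (Γ : Sequent) :
    DerivWith P (c.fill (.fml A :: .fml A.negate :: Γ)) := by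
  induction A generalizing c Γ with
  | pos a => exact fill_append_iff (Γ := [_, _]).2 (.id _ a)
  | neg a => exact fill_swap (fill_append_iff (Γ := [_, _]).2 (.id _ a))
  | and A B ihA ihB => exact and_or (ihA c) (ihB c) Γ
  | or A B ihA ihB => exact fill_swap (and_or (fun Γ => fill_swap (ihA c Γ))
      (fun Γ => fill_swap (ihB c Γ)) Γ)
  | box A ih => exact box_dia ih c Γ
  | dia A ih => exact fill_swap (box_dia (fun c Γ => fill_swap (ih c Γ)) c Γ)

theorem identity {A : Formula} (hA : .fml A ∈ Γ) (hA' : .fml A.negate ∈ Γ) :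
    DerivWith P (c.fill Γ) := by
  have hne : A.negate ≠ A := by cases A <;> simp [Formula.negate]
  obtain ⟨Δ, hΓ⟩ := exists_perm_cons_of_mem hA
  have hA'' : .fml A.negate ∈ Δ := List.mem_of_ne_of_mem (by simpa using hne) (hΓ.mem_iff.1 hA')
  obtain ⟨Δ', hΔ⟩ := exists_perm_cons_of_mem hA''
  exact (identity_cons A c Δ').fill_perm (hΓ.trans (hΔ.cons _)).symm

end DerivWith

/-! ### Semantics and soundness -/

/-- Truth of a formula at a world `w` of the model whose accessibility relation is `<` and whose
valuation is `V`. A conversely well-founded order is a frame of GL. -/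
def Formula.Sat {W : Type*} [Preorder W] (V : W → Set ℕ) : Formula → W → Prop
  | .pos a, w => a ∈ V w
  | .neg a, w => a ∉ V w
  | .and A B, w => A.Sat V w ∧ B.Sat V w
  | .or A B, w => A.Sat V w ∨ B.Sat V w
  | .box A, w => ∀ u > w, A.Sat V u
  | .dia A, w => ∃ u > w, A.Sat V u

mutual

/-- Truth of a sequent element at a world; a bracket is read as the box of its contents. -/
def SeqElem.Holds {W : Type*} [Preorder W] (V : W → Set ℕ) : SeqElem → W → Prop
  | .fml A, w => A.Sat V w
  | .nest Γ, w => ∀ u > w, Sequent.Holds V Γ u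

/-- Truth of a nested sequent at a world; a sequent is read as the disjunction of its elements. -/
def Sequent.Holds {W : Type*} [Preorder W] (V : W → Set ℕ) : Sequent → W → Prop
  | [], _ => False
  | e :: Γ, w => e.Holds V w ∨ Sequent.Holds V Γ w

end

section Soundness

variable {W : Type*} [Preorder W] {V : W → Set ℕ} {w : W} {Γ Δ : Sequent} {A : Formula}

theorem Formula.sat_negate (A : Formula) (w : W) : A.negate.Sat V w ↔ ¬ A.Sat V w := by
  induction A generalizing w with
  | pos | neg => simp [negate, Sat]
  | and _ _ ihA ihB | or _ _ ihA ihB => simp only [negate, Sat, ihA, ihB]; tauto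
  | box _ ih | dia _ ih => simp [negate, Sat, ih]

theorem Sequent.holds_iff : Γ.Holds V w ↔ ∃ e ∈ Γ, e.Holds V w := by
  induction Γ with
  | nil => simp [Sequent.Holds]
  | cons e Γ ih => simp [Sequent.Holds, ih]

theorem Sequent.holds_append :
    Sequent.Holds V (Γ ++ Δ) w ↔ Γ.Holds V w ∨ Δ.Holds V w := by
  simp only [Sequent.holds_iff, List.mem_append, or_and_right, exists_or]

theorem Sequent.holds_singleton : Sequent.Holds V [.fml A] w ↔ A.Sat V w := by
  simp only [Sequent.Holds, SeqElem.Holds, or_false]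

theorem SeqEquiv.holds_iff (h : SeqEquiv Γ Δ) (w : W) :
    Γ.Holds V w ↔ Δ.Holds V w := by
  induction h generalizing w with
  | nil => rfl
  | cons _ ih => simp only [Sequent.Holds, ih]
  | consNest _ _ ih₁ ih₂ => simp only [Sequent.Holds, SeqElem.Holds, ih₁, ih₂]
  | swap a b Γ => simp only [Sequent.Holds, or_left_comm]
  | trans _ _ ih₁ ih₂ => exact (ih₁ w).trans (ih₂ w)

theorem Ctx.holds_fill {S : Set Sequent} {Γ : Sequent}
    (h : ∀ w : W, (∀ X ∈ S, X.Holds V w) → Γ.Holds V w) (c : Ctx)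
    (hS : ∀ X ∈ S, Sequent.Holds V (c.fill X) w) : Sequent.Holds V (c.fill Γ) w := by
  induction c generalizing w with
  | hole Δ =>
    simp only [fill, Sequent.holds_append] at hS ⊢
    by_cases hΔ : Δ.Holds V w
    · exact .inl hΔ
    · exact .inr (h w fun X hX => (hS X hX).resolve_left hΔ)
  | nest Δ c ih =>
    simp only [fill, Sequent.Holds, SeqElem.Holds] at hS ⊢
    by_cases hΔ : Δ.Holds V w
    · exact .inr hΔ
    · exact .inl fun u hu => ih fun X hX => (hS X hX).resolve_right hΔ u hu

theorem Ctx.holds_fill_of_imp (h : ∀ w : W, Γ.Holds V w → Δ.Holds V w) (c : Ctx)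
    (hΓ : Sequent.Holds V (c.fill Γ) w) : Sequent.Holds V (c.fill Δ) w :=
  c.holds_fill (S := {Γ}) (by simpa using h) (by simpa using hΓ)

theorem Ctx.holds_fill_nil {d : Ctx} (hd : 0 < d.depth ∨ ¬ A.Sat V w)
    (hA : ∀ u > w, ¬ A.Sat V u) (h : Sequent.Holds V (d.fill [.fml A]) w) :
    Sequent.Holds V (d.fill []) w := by
  induction d generalizing w with
  | hole Δ =>
    have hw : ¬ A.Sat V w := hd.resolve_left (lt_irrefl 0)
    simpa only [fill, Sequent.holds_append, Sequent.holds_singleton, hw, or_false,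
      List.append_nil] using h
  | nest Δ d ih =>
    simp only [fill, Sequent.Holds, SeqElem.Holds] at h ⊢
    exact h.imp_left fun h u hu =>
      ih (.inr (hA u hu)) (fun t ht => hA t (hu.trans ht)) (h u hu)

theorem Formula.sat_box_of_loeb [WellFoundedGT W]
    (h : ∀ u > w, (Formula.dia A.negate).Sat V u ∨ A.Sat V u) : (Formula.box A).Sat V w := by
  intro u hu
  induction u using WellFoundedGT.induction with
  | _ u ih =>
    refine (h u hu).resolve_left fun ⟨t, ht, hA⟩ => ?_
    exact (A.sat_negate t).1 hA (ih t ht (hu.trans ht))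

theorem DerivWith.sound [WellFoundedGT W] {P : Formula → Prop} (h : DerivWith P Γ) (w : W) :
    Γ.Holds V w := by
  induction h generalizing w with
  | id c a =>
    refine c.holds_fill (S := ∅) (fun w _ => ?_) (by simp)
    simpa only [Sequent.Holds, SeqElem.Holds, Formula.Sat, or_false] using em _
  | @and c A B _ _ ihA ihB =>
    refine c.holds_fill (S := {[.fml A], [.fml B]}) (fun w => ?_) (by simp [ihA, ihB])
    simp [Sequent.holds_singleton, Formula.Sat]
  | or _ ih =>
    refine Ctx.holds_fill_of_imp (fun w => ?_) _ (ih w)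
    simp [Sequent.Holds, SeqElem.Holds, Formula.Sat]
  | box _ ih =>
    refine Ctx.holds_fill_of_imp (fun w h => ?_) _ (ih w)
    simp only [Sequent.Holds, SeqElem.Holds, or_false] at h ⊢
    exact Formula.sat_box_of_loeb h
  | @dia c d A hd _ ih =>
    refine c.holds_fill_of_imp (fun w h => ?_) (ih w)
    rw [Sequent.holds_append, Sequent.holds_singleton] at h ⊢
    refine or_iff_not_imp_right.2 fun hA => Ctx.holds_fill_nil (.inl hd) ?_ (h.resolve_right hA)
    exact fun u hu hu' => hA ⟨u, hu, hu'⟩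
  | @cut c A _ _ _ ih ih' =>
    refine c.holds_fill (S := {[.fml A], [.fml A.negate]}) (fun w => ?_) (by simp [ih, ih'])
    simp [Sequent.holds_singleton, Formula.sat_negate]
  | exch h _ ih => exact (h.holds_iff w).1 (ih w)

end Soundness

/-! ### Trees -/

/-- Trees without infinite branches, with arbitrary branching, whose nodes carry a set of true
atoms. They serve as the worlds of one GL model, in which a world sees its proper subtrees. -/
inductive KripkeTree : Type 1 where
  | node (v : Set ℕ) (ι : Type) (f : ι → KripkeTree) : KripkeTree

namespace KripkeTree

/-- The set of atoms that are true at the root of a tree. -/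
def label : KripkeTree → Set ℕ
  | node v _ _ => v

/-- `IsChild u t`: the tree `u` is an immediate subtree of `t`. -/
inductive IsChild : KripkeTree → KripkeTree → Prop where
  | intro {v : Set ℕ} {ι : Type} {f : ι → KripkeTree} (i : ι) : IsChild (f i) (node v ι f)

theorem wellFounded_isChild : WellFounded IsChild := by
  refine ⟨fun t => ?_⟩
  induction t with
  | node v ι f ih => exact ⟨_, fun _ ⟨i⟩ => ih i⟩

instance : IsStrictOrder KripkeTree fun t u => Relation.TransGen IsChild u t where
  irrefl t h := wellFounded_isChild.transGen.irrefl.irrefl t h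
  trans _ _ _ h h' := h'.trans h

noncomputable instance : PartialOrder KripkeTree :=
  partialOrderOfSO fun t u => Relation.TransGen IsChild u t

instance : WellFoundedGT KripkeTree :=
  ⟨wellFounded_isChild.transGen⟩

theorem node_lt_iff {v : Set ℕ} {ι : Type} {f : ι → KripkeTree} {t : KripkeTree} :
    node v ι f < t ↔ ∃ i, f i ≤ t := by
  constructor
  · intro h
    obtain ⟨_, h, ⟨i⟩⟩ := Relation.TransGen.tail'_iff.1 h
    exact ⟨i, Relation.reflTransGen_iff_eq_or_transGen.1 h⟩
  · rintro ⟨i, rfl | h⟩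
    · exact .single ⟨i⟩
    · exact .tail h ⟨i⟩

end KripkeTree

/-! ### Closed sets of formulas -/

theorem Formula.negate_negate (A : Formula) : A.negate.negate = A := by
  induction A <;> simp_all only [negate]

/-- The set of subformulas of a formula. -/
def Formula.subformulas : Formula → Finset Formula
  | .pos a => {.pos a}
  | .neg a => {.neg a}
  | .and A B => insert (.and A B) (A.subformulas ∪ B.subformulas)
  | .or A B => insert (.or A B) (A.subformulas ∪ B.subformulas)
  | .box A => insert (.box A) A.subformulas
  | .dia A => insert (.dia A) A.subformulas

theorem Formula.mem_subformulas_self (A : Formula) : A ∈ A.subformulas := by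
  cases A <;> simp [subformulas]

theorem Formula.subformulas_subset {A B : Formula} (h : A ∈ B.subformulas) :
    A.subformulas ⊆ B.subformulas := by
  induction B <;> grind [subformulas]

theorem Formula.subformulas_negate (A : Formula) :
    A.negate.subformulas = A.subformulas.image negate := by
  induction A <;> simp_all only [negate, subformulas, Finset.image_insert, Finset.image_union,
    Finset.image_singleton]

/-- A set of formulas closed under subformulas and negation. Backward proof search from a sequent
over `U` stays within `U`. -/
structure ClosedSet (U : Finset Formula) : Prop where
  subformulas_subset {A : Formula} : A ∈ U → A.subformulas ⊆ U
  negate_mem {A : Formula} : A ∈ U → A.negate ∈ U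

namespace ClosedSet

variable {U : Finset Formula} {A B : Formula}

theorem and (hU : ClosedSet U) (h : .and A B ∈ U) : A ∈ U ∧ B ∈ U := by
  constructor <;> apply hU.subformulas_subset h <;>
    simp [Formula.subformulas, Formula.mem_subformulas_self]

theorem or (hU : ClosedSet U) (h : .or A B ∈ U) : A ∈ U ∧ B ∈ U := by
  constructor <;> apply hU.subformulas_subset h <;>
    simp [Formula.subformulas, Formula.mem_subformulas_self]

theorem box (hU : ClosedSet U) (h : .box A ∈ U) : A ∈ U :=
  hU.subformulas_subset h (Finset.mem_insert_of_mem A.mem_subformulas_self)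

theorem dia (hU : ClosedSet U) (h : .dia A ∈ U) : A ∈ U :=
  hU.subformulas_subset h (Finset.mem_insert_of_mem A.mem_subformulas_self)

end ClosedSet

theorem exists_closedSet (S : Finset Formula) : ∃ U, S ⊆ U ∧ ClosedSet U := by
  set T := S.biUnion Formula.subformulas
  have hsub {A : Formula} (hA : A ∈ T) : A.subformulas ⊆ T := by
    obtain ⟨B, hB, hAB⟩ := Finset.mem_biUnion.1 hA
    exact (Formula.subformulas_subset hAB).trans (Finset.subset_biUnion_of_mem _ hB)
  refine ⟨T ∪ T.image .negate, fun A hA => ?_, fun {A} hA => ?_, fun {A} hA => ?_⟩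
  · exact Finset.mem_union_left _ (Finset.mem_biUnion.2 ⟨A, hA, A.mem_subformulas_self⟩)
  · obtain hA | hA := Finset.mem_union.1 hA
    · exact (hsub hA).trans Finset.subset_union_left
    · obtain ⟨B, hB, rfl⟩ := Finset.mem_image.1 hA
      rw [Formula.subformulas_negate]
      exact (Finset.image_subset_image (hsub hB)).trans Finset.subset_union_right
  · obtain hA | hA := Finset.mem_union.1 hA
    · exact Finset.mem_union_right _ (Finset.mem_image_of_mem _ hA)
    · obtain ⟨B, hB, rfl⟩ := Finset.mem_image.1 hA
      exact Finset.mem_union_left _ (B.negate_negate.symm ▸ hB)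

mutual

/-- The set of formulas that are elements of a sequent element, at any bracket depth. -/
def SeqElem.formulas : SeqElem → Finset Formula
  | .fml A => {A}
  | .nest Γ => Sequent.formulas Γ

/-- The set of formulas that are elements of a nested sequent, at any bracket depth. -/
def Sequent.formulas : Sequent → Finset Formula
  | [] => ∅
  | e :: Γ => e.formulas ∪ Sequent.formulas Γ

end

section Formulas

variable {U : Finset Formula} {A : Formula} {Γ Δ : Sequent}

theorem Sequent.formulas_eq_of_perm (h : Γ.Perm Δ) : Γ.formulas = Δ.formulas := by
  induction h with
  | nil => rfl
  | cons e _ ih => rw [Sequent.formulas, Sequent.formulas, ih]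
  | swap e e' Γ => simp only [Sequent.formulas, Finset.union_left_comm]
  | trans _ _ ih₁ ih₂ => exact ih₁.trans ih₂

theorem Sequent.formulas_fml_cons_subset_iff :
    Sequent.formulas (.fml A :: Γ) ⊆ U ↔ A ∈ U ∧ Γ.formulas ⊆ U := by
  rw [Sequent.formulas, SeqElem.formulas, Finset.union_subset_iff, Finset.singleton_subset_iff]

theorem Sequent.formulas_nest_cons_subset_iff :
    Sequent.formulas (.nest Γ :: Δ) ⊆ U ↔ Γ.formulas ⊆ U ∧ Δ.formulas ⊆ U := by
  rw [Sequent.formulas, SeqElem.formulas, Finset.union_subset_iff]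

theorem Sequent.formulas_map_fml_append_subset_iff {l : List Formula} :
    Sequent.formulas (l.map .fml ++ Γ) ⊆ U ↔ (∀ A ∈ l, A ∈ U) ∧ Γ.formulas ⊆ U := by
  induction l with
  | nil => simp
  | cons A l ih =>
    rw [List.map_cons, List.cons_append, Sequent.formulas_fml_cons_subset_iff, ih,
      List.forall_mem_cons, and_assoc]

end Formulas

/-! ### The termination measure -/

mutual

/-- The number of brackets in a sequent element. -/
def SeqElem.brackets : SeqElem → ℕ
  | .fml _ => 0
  | .nest Γ => Sequent.brackets Γ + 1

/-- The number of brackets in a nested sequent. -/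
def Sequent.brackets : Sequent → ℕ
  | [] => 0
  | e :: Γ => e.brackets + Sequent.brackets Γ

end

theorem Sequent.brackets_eq_sum (Γ : Sequent) : Γ.brackets = (Γ.map SeqElem.brackets).sum := by
  induction Γ with
  | nil => rfl
  | cons e Γ ih => rw [Sequent.brackets, ih, List.map_cons, List.sum_cons]

theorem Sequent.brackets_lt_of_nest_mem {N Γ : Sequent} (h : .nest N ∈ Γ) :
    N.brackets < Γ.brackets := by
  have hle : (SeqElem.nest N).brackets ≤ (Γ.map SeqElem.brackets).sum :=
    List.le_sum_of_mem (List.mem_map_of_mem h)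
  rwa [← Γ.brackets_eq_sum] at hle

theorem Sequent.brackets_fml_cons (A : Formula) (Γ : Sequent) :
    Sequent.brackets (.fml A :: Γ) = Γ.brackets :=
  Nat.zero_add _

theorem Sequent.brackets_map_fml_append (l : List Formula) (Γ : Sequent) :
    Sequent.brackets (l.map .fml ++ Γ) = Γ.brackets := by
  induction l with
  | nil => rfl
  | cons A l ih => exact (Sequent.brackets_fml_cons A _).trans ih

/-- The work that a formula causes before its boxes are expanded. The argument of a diamond is not
counted, since a diamond is only moved into the set of formulas available deeper down. -/
def Formula.localSize : Formula → ℕ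
  | .and A B => A.localSize + B.localSize + 1
  | .or A B => A.localSize + B.localSize + 1
  | .dia _ => 1
  | _ => 0

/-- The local size of a sequent element; brackets do not count. -/
def SeqElem.localSize : SeqElem → ℕ
  | .fml A => A.localSize
  | .nest _ => 0

/-- The local size of a nested sequent, that is, of its outermost level. -/
def Sequent.localSize (Γ : Sequent) : ℕ :=
  (Γ.map SeqElem.localSize).sum

theorem Sequent.localSize_fml_cons (A : Formula) (Γ : Sequent) :
    Sequent.localSize (.fml A :: Γ) = A.localSize + Γ.localSize :=
  List.sum_cons

/-- The termination measure of backward proof search from `Γ`, where `D ⊆ U` is the set of formulas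
available below `Γ`. -/
def searchMeasure (U D : Finset Formula) (Γ : Sequent) : ℕ ×ₗ ℕ ×ₗ ℕ :=
  toLex (Γ.brackets, toLex ((U \ D).card, Γ.localSize))

section SearchMeasure

variable {U D E : Finset Formula} {Γ Δ : Sequent}

theorem searchMeasure_eq_of_perm (h : Γ.Perm Δ) : searchMeasure U D Γ = searchMeasure U D Δ := by
  simp only [searchMeasure, Sequent.brackets_eq_sum, Sequent.localSize,
    (h.map SeqElem.brackets).sum_eq, (h.map SeqElem.localSize).sum_eq]

theorem searchMeasure_lt_of_brackets_lt (h : Δ.brackets < Γ.brackets) :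
    searchMeasure U E Δ < searchMeasure U D Γ := by
  simp only [searchMeasure, Prod.Lex.toLex_lt_toLex]
  exact .inl h

theorem searchMeasure_lt_of_ssubset (hb : Δ.brackets ≤ Γ.brackets) (hD : D ⊂ E) (hE : E ⊆ U) :
    searchMeasure U E Δ < searchMeasure U D Γ := by
  have hcard := Finset.card_lt_card hD
  have hUE := Finset.card_sdiff_add_card_eq_card hE
  have hUD := Finset.card_sdiff_add_card_eq_card (hD.subset.trans hE)
  simp only [searchMeasure, Prod.Lex.toLex_lt_toLex]
  omega

theorem searchMeasure_lt_of_localSize_lt (hb : Δ.brackets = Γ.brackets) (hD : D ⊆ E)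
    (hs : Δ.localSize < Γ.localSize) : searchMeasure U E Δ < searchMeasure U D Γ := by
  have hcard : (U \ E).card ≤ (U \ D).card :=
    Finset.card_le_card (Finset.sdiff_subset_sdiff subset_rfl hD)
  simp only [searchMeasure, Prod.Lex.toLex_lt_toLex]
  omega

end SearchMeasure

/-! ### Countermodels -/

/-- `Γ` fails at the root of some tree in which every formula of `D` fails strictly below the
root. -/
def Refutable (D : Finset Formula) (Γ : Sequent) : Prop :=
  ∃ t : KripkeTree, ¬ Γ.Holds KripkeTree.label t ∧
    ∀ A ∈ D, ∀ u > t, ¬ A.Sat KripkeTree.label u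

/-- The sequents that have to be refuted at successors of a world in order to refute `Γ` there. -/
def Sequent.children (Γ : Sequent) : Set Sequent :=
  {N | .nest N ∈ Γ ∨ ∃ B : Formula, .fml (.box B) ∈ Γ ∧ N = [.fml B]}

namespace Refutable

variable {D E : Finset Formula} {A : Formula} {Γ Δ : Sequent}

theorem mono (hD : D ⊆ E) (h : ∀ t, Δ.Holds KripkeTree.label t → Γ.Holds KripkeTree.label t) :
    Refutable E Γ → Refutable D Δ := fun ⟨t, ht, htE⟩ =>
  ⟨t, mt (h t) ht, fun A hA => htE A (hD hA)⟩

theorem dia (h : Refutable (insert A D) Γ) : Refutable D (.fml (.dia A) :: Γ) := by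
  obtain ⟨t, ht, htD⟩ := h
  rw [Finset.forall_mem_insert] at htD
  refine ⟨t, ?_, htD.2⟩
  rintro (⟨u, hu, hA⟩ | hΓ)
  · exact htD.1 u hu hA
  · exact ht hΓ

theorem of_children (hatom : ∀ a, .fml (.pos a) ∈ Γ → .fml (.neg a) ∉ Γ)
    (hsize : ∀ A, .fml A ∈ Γ → A.localSize = 0)
    (h : ∀ N ∈ Γ.children, Refutable D (D.toList.map .fml ++ N)) : Refutable D Γ := by
  choose f hf hfD using h
  simp only [Sequent.holds_append, not_or] at hf
  have hroot : ∀ A ∈ D, ∀ N hN, ¬ A.Sat KripkeTree.label (f N hN) := fun A hA N hN hsat =>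
    (hf N hN).1 (Sequent.holds_iff.2
      ⟨.fml A, List.mem_map_of_mem (Finset.mem_toList.2 hA), hsat⟩)
  refine ⟨.node {a | .fml (.neg a) ∈ Γ} Γ.children fun N => f N N.2, fun hΓ => ?_, ?_⟩
  · obtain ⟨e, he, hsat⟩ := Sequent.holds_iff.1 hΓ
    have hchild (N : Sequent) (hN : N ∈ Γ.children) :
        KripkeTree.node {a | .fml (.neg a) ∈ Γ} Γ.children (fun N => f N N.2) < f N hN :=
      KripkeTree.node_lt_iff.2 ⟨⟨N, hN⟩, le_rfl⟩
    match e with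
    | .nest N => exact (hf N (.inl he)).2 (hsat _ (hchild N _))
    | .fml (.pos a) => exact hatom a he hsat
    | .fml (.neg _) => exact hsat he
    | .fml (.box B) =>
      exact (hf [.fml B] (.inr ⟨B, he, rfl⟩)).2
        (Sequent.holds_singleton.2 (hsat _ (hchild _ _)))
    | .fml (.and _ _) | .fml (.or _ _) | .fml (.dia _) => cases hsize _ he
  · intro A hA u hu
    obtain ⟨⟨N, hN⟩, rfl | hlt⟩ := KripkeTree.node_lt_iff.1 hu
    · exact hroot A hA N hN
    · exact hfD N hN A hA u hlt

end Refutable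

/-! ### Proof search -/

/-- An underivable sequent `c{Γ}` over `U`, seen from the hole of `c` in backward proof search.
The formulas of `D` are those whose diamonds have already been met at or above the hole. -/
structure OpenGoal (U : Finset Formula) (c : Ctx) (D : Finset Formula) (Γ : Sequent) : Prop where
  formulas_subset : Γ.formulas ⊆ U
  subset : D ⊆ U
  available : ∀ A ∈ D, Available (fun _ => False) c A
  not_deriv : ¬ Deriv (c.fill Γ)

namespace OpenGoal

variable {U D : Finset Formula} {c : Ctx} {A B : Formula} {Γ Δ N : Sequent}

theorem perm (h : OpenGoal U c D Γ) (hΓ : Γ.Perm Δ) : OpenGoal U c D Δ where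
  formulas_subset := Sequent.formulas_eq_of_perm hΓ ▸ h.formulas_subset
  subset := h.subset
  available := h.available
  not_deriv hd := h.not_deriv (hd.fill_perm hΓ.symm)

theorem negate_notMem (h : OpenGoal U c D Γ) (hA : .fml A ∈ Γ) : .fml A.negate ∉ Γ :=
  fun hA' => h.not_deriv (.identity hA hA')

theorem and (hU : ClosedSet U) (h : OpenGoal U c D (.fml (.and A B) :: Γ)) :
    OpenGoal U c D (.fml A :: Γ) ∨ OpenGoal U c D (.fml B :: Γ) := by
  obtain ⟨hAB, hΓ⟩ := Sequent.formulas_fml_cons_subset_iff.1 h.formulas_subset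
  obtain ⟨hA, hB⟩ := hU.and hAB
  by_cases hdA : Deriv (c.fill (.fml A :: Γ))
  · exact .inr ⟨Sequent.formulas_fml_cons_subset_iff.2 ⟨hB, hΓ⟩, h.subset, h.available,
      fun hdB => h.not_deriv (.and_cons hdA hdB)⟩
  · exact .inl ⟨Sequent.formulas_fml_cons_subset_iff.2 ⟨hA, hΓ⟩, h.subset, h.available, hdA⟩

theorem or (hU : ClosedSet U) (h : OpenGoal U c D (.fml (.or A B) :: Γ)) :
    OpenGoal U c D (.fml A :: .fml B :: Γ) := by
  obtain ⟨hAB, hΓ⟩ := Sequent.formulas_fml_cons_subset_iff.1 h.formulas_subset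
  refine ⟨?_, h.subset, h.available, fun hd => h.not_deriv (.or_cons hd)⟩
  simp only [Sequent.formulas_fml_cons_subset_iff]
  exact ⟨(hU.or hAB).1, (hU.or hAB).2, hΓ⟩

theorem dia (hU : ClosedSet U) (h : OpenGoal U c D (.fml (.dia A) :: Γ)) :
    OpenGoal U (c.comp (.hole [.fml (.dia A)])) (insert A D) Γ := by
  obtain ⟨hdA, hΓ⟩ := Sequent.formulas_fml_cons_subset_iff.1 h.formulas_subset
  refine ⟨hΓ, Finset.insert_subset (hU.dia hdA) h.subset, ?_, fun hd => h.not_deriv ?_⟩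
  · rw [Finset.forall_mem_insert]
    exact ⟨.of_dia _ c A, fun B hB => (h.available B hB).comp _⟩
  · exact DerivWith.fill_comp_iff.1 hd

theorem nest (h : OpenGoal U c D (.nest N :: Γ)) :
    OpenGoal U (c.comp (.nest Γ (.hole []))) D (D.toList.map .fml ++ N) where
  formulas_subset := Sequent.formulas_map_fml_append_subset_iff.2
    ⟨fun _ hA => h.subset (Finset.mem_toList.1 hA),
      (Sequent.formulas_nest_cons_subset_iff.1 h.formulas_subset).1⟩
  subset := h.subset
  available A hA := (h.available A hA).comp _
  not_deriv hd :=
    have hN : Deriv ((c.comp (.nest Γ (.hole []))).fill N) := Available.fill_of_append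
      (fun A hA => h.available A (Finset.mem_toList.1 hA)) Nat.one_pos hd
    h.not_deriv (DerivWith.fill_comp_iff.1 hN)

theorem box_nest (hU : ClosedSet U) (h : OpenGoal U c D (.fml (.box B) :: Γ)) :
    OpenGoal U c D (.nest [.fml (.dia B.negate), .fml B] :: Γ) := by
  obtain ⟨hbB, hΓ⟩ := Sequent.formulas_fml_cons_subset_iff.1 h.formulas_subset
  have hdB : .dia B.negate ∈ U := hU.negate_mem hbB
  refine ⟨?_, h.subset, h.available, fun hd => h.not_deriv (.box_cons hd)⟩
  simp only [Sequent.formulas_nest_cons_subset_iff, Sequent.formulas_fml_cons_subset_iff]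
  exact ⟨⟨hdB, hU.box hbB, Finset.empty_subset U⟩, hΓ⟩

theorem box (hU : ClosedSet U) (h : OpenGoal U c D (.fml (.box B) :: Γ)) :
    B.negate ∉ D ∧ ∃ c', OpenGoal U c' (insert B.negate D) (D.toList.map .fml ++ [.fml B]) := by
  have hN := (h.box_nest hU).nest
  refine ⟨fun hB => hN.negate_notMem (A := B) (by simp) ?_, _, (hN.perm List.perm_middle).dia hU⟩
  exact List.mem_append_left _ (List.mem_map_of_mem (Finset.mem_toList.2 hB))

theorem exists_child (hU : ClosedSet U) (h : OpenGoal U c D Γ) (hN : N ∈ Γ.children) :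
    ∃ c' D', D ⊆ D' ∧ OpenGoal U c' D' (D.toList.map .fml ++ N) ∧
      searchMeasure U D' (D.toList.map .fml ++ N) < searchMeasure U D Γ := by
  obtain hN | ⟨B, hB, rfl⟩ := hN
  · obtain ⟨Δ, hΓ⟩ := exists_perm_cons_of_mem hN
    refine ⟨_, D, subset_rfl, (h.perm hΓ).nest, searchMeasure_lt_of_brackets_lt ?_⟩
    rw [Sequent.brackets_map_fml_append]
    exact Sequent.brackets_lt_of_nest_mem hN
  · obtain ⟨Δ, hΓ⟩ := exists_perm_cons_of_mem hB
    obtain ⟨hfresh, c', hc'⟩ := (h.perm hΓ).box hU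
    refine ⟨c', _, Finset.subset_insert .., hc',
      searchMeasure_lt_of_ssubset ?_ (Finset.ssubset_insert hfresh) hc'.subset⟩
    rw [Sequent.brackets_map_fml_append]
    exact Nat.zero_le _

theorem exists_reduct (hU : ClosedSet U) (h : OpenGoal U c D (.fml A :: Γ))
    (hA : A.localSize ≠ 0) :
    ∃ c' D' Δ, OpenGoal U c' D' Δ ∧ searchMeasure U D' Δ < searchMeasure U D (.fml A :: Γ) ∧
      (Refutable D' Δ → Refutable D (.fml A :: Γ)) := by
  cases A with
  | pos | neg | box => cases hA rfl
  | and A B =>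
    obtain h | h := h.and hU
    all_goals
      refine ⟨c, D, _, h, searchMeasure_lt_of_localSize_lt rfl subset_rfl ?_,
        .mono subset_rfl fun t => Or.imp_left ?_⟩
      · simp only [Sequent.localSize_fml_cons, Formula.localSize]
        omega
    exacts [And.left, And.right]
  | or A B =>
    refine ⟨c, D, _, h.or hU, searchMeasure_lt_of_localSize_lt ?_ subset_rfl ?_,
      .mono subset_rfl fun t => or_assoc.1⟩
    · simp only [Sequent.brackets_fml_cons]
    · simp only [Sequent.localSize_fml_cons, Formula.localSize]
      omega
  | dia A =>
    refine ⟨_, _, Γ, h.dia hU, searchMeasure_lt_of_localSize_lt ?_ (Finset.subset_insert A D) ?_,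
      .dia⟩
    · rw [Sequent.brackets_fml_cons]
    · simp only [Sequent.localSize_fml_cons, Formula.localSize]
      omega

theorem refutable (hU : ClosedSet U) (h : OpenGoal U c D Γ) : Refutable D Γ := by
  induction hm : searchMeasure U D Γ using WellFoundedLT.induction generalizing c D Γ with
  | _ m ih =>
    subst hm
    by_cases hred : ∃ A, .fml A ∈ Γ ∧ A.localSize ≠ 0
    · obtain ⟨A, hA, hsize⟩ := hred
      obtain ⟨Γ', hΓ⟩ := exists_perm_cons_of_mem hA
      obtain ⟨c', D', Δ, hΔ, hlt, href⟩ := (h.perm hΓ).exists_reduct hU hsize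
      rw [← searchMeasure_eq_of_perm hΓ] at hlt
      exact (href (ih _ hlt hΔ rfl)).mono subset_rfl fun t =>
        ((SeqEquiv.of_perm hΓ).holds_iff t).1
    · push Not at hred
      refine .of_children (fun _ => h.negate_notMem) hred fun N hN => ?_
      obtain ⟨c', D', hD, hN', hlt⟩ := h.exists_child hU hN
      exact (ih _ hlt hN' rfl).mono hD fun _ => id

end OpenGoal

theorem deriv_of_forall_holds {Γ : Sequent}
    (h : ∀ t : KripkeTree, Γ.Holds KripkeTree.label t) : Deriv Γ := by
  by_contra hn
  obtain ⟨U, hΓ, hU⟩ := exists_closedSet Γ.formulas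
  have hgoal : OpenGoal U (.hole []) ∅ Γ := ⟨hΓ, U.empty_subset, by simp, hn⟩
  obtain ⟨t, ht, -⟩ := hgoal.refutable hU
  exact ht (h t)

/-- cut elimination — everything provable with cuts is
provable without. -/
theorem cut_elimination (Γ : Sequent)
    (h : DerivWith (fun _ => True) Γ) : Deriv Γ := by
  exact deriv_of_forall_holds h.sound
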